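/- If α ∈ (0,1) is a 0'-right-c.e. real and c ∈ ℕ satisfies α + 2^{-c} < 1, then there exist an oracle machine M and a binary string ρ of length c such that M(σ,n) is undefined for every n and every string σ compatible with ρ, and μ(TOT(M)) = μ(INF(M)) = α. -/

import Mathlib

open scoped Classical
open MeasureTheory

namespace RandProb

/-- Cantor space: the space of infinite binary sequences. -/
abbrev Cantor := ℕ → Bool

/-! ### Oracle partial recursive functions, via codes -/

/-- Codes for partial recursive functions with access to an oracle `O : ℕ → ℕ`.
These codes play the role of (oracle) Turing machines. -/
inductive CodeO : Type
  | zero : CodeO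
  | succ : CodeO
  | left : CodeO
  | right : CodeO
  | oracle : CodeO
  | pair : CodeO → CodeO → CodeO
  | comp : CodeO → CodeO → CodeO
  | prec : CodeO → CodeO → CodeO
  | rfind' : CodeO → CodeO

/-- Evaluation of an oracle code with (total) oracle `O`. -/
def CodeO.eval (O : ℕ → ℕ) : CodeO → ℕ →. ℕ
  | .zero => pure 0
  | .succ => Nat.succ
  | .left => ↑fun n : ℕ => n.unpair.1
  | .right => ↑fun n : ℕ => n.unpair.2
  | .oracle => ↑fun n : ℕ => O n
  | .pair cf cg => fun n => Nat.pair <$> cf.eval O n <*> cg.eval O n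
  | .comp cf cg => fun n => cg.eval O n >>= cf.eval O
  | .prec cf cg =>
    Nat.unpaired fun a n =>
      n.rec (cf.eval O a) fun y IH => do
        let i ← IH
        cg.eval O (Nat.pair a (Nat.pair y i))
  | .rfind' cf =>
    Nat.unpaired fun a m =>
      (Nat.rfind fun n => (fun m => m = 0) <$> cf.eval O (Nat.pair a (n + m))).map (· + m)

/-- A canonical injective numbering of oracle codes. -/
def CodeO.encode : CodeO → ℕ
  | .zero => 0
  | .succ => 1
  | .left => 2
  | .right => 3
  | .oracle => 4
  | .pair cf cg => 2 * (2 * Nat.pair cf.encode cg.encode) + 5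
  | .comp cf cg => 2 * (2 * Nat.pair cf.encode cg.encode + 1) + 5
  | .prec cf cg => 2 * (2 * Nat.pair cf.encode cg.encode) + 6
  | .rfind' cf => 2 * (2 * cf.encode + 1) + 6

/-- The Turing jump of an oracle: the halting problem relative to `O`,
as a `{0,1}`-valued function. -/
noncomputable def jump (O : ℕ → ℕ) : ℕ → ℕ := fun e =>
  if ∃ c : CodeO, c.encode = e ∧ (c.eval O e).Dom then 1 else 0

/-- `iterJump n` is `∅^(n)`, the `n`-th iterate of the halting problem (as an oracle). -/
noncomputable def iterJump : ℕ → ℕ → ℕ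
  | 0 => fun _ => 0
  | n + 1 => jump (iterJump n)

/-- `S ⊆ ℕ` is computably enumerable relative to the oracle `O`. -/
def CeIn (O : ℕ → ℕ) (S : Set ℕ) : Prop := ∃ c : CodeO, S = {m | (c.eval O m).Dom}

/-- The left Dedekind cut of `α` (as a set of codes of rationals) is c.e. in `O`. -/
def LeftCeIn (O : ℕ → ℕ) (α : ℝ) : Prop :=
  CeIn O {m | ∃ q : ℚ, Encodable.encode q = m ∧ (q : ℝ) < α}

/-- The right Dedekind cut of `α` (as a set of codes of rationals) is c.e. in `O`. -/
def RightCeIn (O : ℕ → ℕ) (α : ℝ) : Prop :=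
  CeIn O {m | ∃ q : ℚ, Encodable.encode q = m ∧ α < (q : ℝ)}

/-! ### Martin-Löf randomness for real numbers -/

/-- The `i`-th component of a Martin-Löf test coded by the set `W ⊆ ℕ`:
the union of all open rational intervals whose codes are enumerated into the
`i`-th section of `W`. -/
def testSet (W : Set ℕ) (i : ℕ) : Set ℝ :=
  {x | ∃ p q : ℚ, Nat.pair i (Encodable.encode (p, q)) ∈ W ∧ (p : ℝ) < x ∧ x < (q : ℝ)}

/-- `α` is Martin-Löf random relative to the oracle `O`. -/
def MLRandomIn (O : ℕ → ℕ) (α : ℝ) : Prop :=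
  ∀ W : Set ℕ, CeIn O W →
    (∀ i, volume (testSet W i) ≤ ENNReal.ofReal ((2 : ℝ)⁻¹ ^ i)) →
    ∃ i, α ∉ testSet W i

/-- `α` is `n`-random: Martin-Löf random relative to `∅^(n-1)`. -/
def NRandom (n : ℕ) (α : ℝ) : Prop := MLRandomIn (iterJump (n - 1)) α

/-! ### The uniform measure on Cantor space -/

/-- The binary digits of a real number (meaningful on `[0,1)`). -/
noncomputable def digits (x : ℝ) : Cantor := fun n => decide (⌊x * 2 ^ (n + 1)⌋ % 2 = 1)

/-- The uniform (Lebesgue) product measure on Cantor space, obtained as the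
pushforward of Lebesgue measure on `[0,1)` under the binary-digit map. -/
noncomputable def mu : Measure Cantor :=
  Measure.map digits (volume.restrict (Set.Ico (0 : ℝ) 1))

/-- The uniform measure of a set of elements of Cantor space, as a real number. -/
noncomputable def muR (S : Set Cantor) : ℝ := (mu S).toReal

/-! ### Strings, prefixes and cylinders -/

/-- The length-`n` initial segment of `X ∈ 2^ω`, as a finite binary string. -/
def initSeg (X : Cantor) (n : ℕ) : List Bool := (List.range n).map X

/-- `⟦S⟧`: the elements of Cantor space having a prefix in the set of strings `S`. -/
def cyl (S : Set (List Bool)) : Set Cantor := {X | ∃ n, initSeg X n ∈ S}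

/-- A set of strings is prefix-free if none of its elements properly extends another. -/
def IsPrefixFree (S : Set (List Bool)) : Prop := ∀ σ ∈ S, ∀ τ ∈ S, σ <+: τ → σ = τ

/-- A set of strings is upward closed if it is closed under taking extensions. -/
def UpClosed (S : Set (List Bool)) : Prop := ∀ σ ∈ S, ∀ τ, σ <+: τ → τ ∈ S

/-- Two strings are compatible if one is a prefix of the other. -/
def Compatible (σ τ : List Bool) : Prop := σ <+: τ ∨ τ <+: σ

/-! ### Oracle machines -/

/-- An element of Cantor space viewed as a `{0,1}`-valued oracle. -/
def oX (X : Cantor) : ℕ → ℕ := fun n => cond (X n) 1 0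

/-- `evalO X c n`: the (possibly divergent) output of the oracle machine `c`
on input `n` with oracle `X`. -/
def evalO (X : Cantor) (c : CodeO) (n : ℕ) : Part ℕ := c.eval (oX X) n

/-- The oracle obtained by writing the string `ρ` before the bits of `X`. -/
def prepend (ρ : List Bool) (X : Cantor) : Cantor := fun n =>
  if n < ρ.length then ρ.getD n false else X (n - ρ.length)

/-- `X ∈ 2^ω` extends the finite string `ρ`. -/
def Extends (X : Cantor) (ρ : List Bool) : Prop := initSeg X ρ.length = ρ

/-- `u` is a universal oracle machine: some effective, prefix-free translation
`c ↦ σ_c` satisfies `u(σ_c * X, n) ≃ c(X, n)` for all machines `c`. -/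
def UniversalOM (u : CodeO) : Prop :=
  ∃ σ : CodeO → List Bool,
    (∃ f : ℕ → ℕ, Computable f ∧ ∀ c : CodeO, f c.encode = Encodable.encode (σ c)) ∧
    IsPrefixFree (Set.range σ) ∧
    ∀ (c : CodeO) (X : Cantor) (n : ℕ), evalO (prepend (σ c) X) u n = evalO X c n

/-- `TOT(c)`: the oracles `X` such that the function `c(X)` is total. -/
def TOT (c : CodeO) : Set Cantor := {X | ∀ n, (evalO X c n).Dom}

/-- The domain of the partial function `c(X)`. -/
def domSet (c : CodeO) (X : Cantor) : Set ℕ := {n | (evalO X c n).Dom}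

/-- The range of the partial function `c(X)`. -/
def ranSet (c : CodeO) (X : Cantor) : Set ℕ := {v | ∃ n, v ∈ evalO X c n}

/-- `INF(c)`: the oracles `X` such that `c(X)` has infinite domain. -/
def INF (c : CodeO) : Set Cantor := {X | (domSet c X).Infinite}

/-- `COF(c)`: the oracles `X` such that `c(X)` has cofinite domain. -/
def COF (c : CodeO) : Set Cantor := {X | (domSet c X)ᶜ.Finite}

/-- `COM(c)`: the oracles `X` such that `c(X)` has computable domain. -/
def COM (c : CodeO) : Set Cantor := {X | ComputablePred fun n => n ∈ domSet c X}

/-- The characteristic function of a set of naturals. -/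
noncomputable def chi (A : Set ℕ) : ℕ → ℕ := fun n => if n ∈ A then 1 else 0

/-- Turing reducibility between sets of naturals. -/
def TuringLEs (B A : Set ℕ) : Prop := ∃ c : CodeO, ∀ n, c.eval (chi A) n = Part.some (chi B n)

/-- The halting problem `∅'` as a set of naturals. -/
noncomputable def HaltingSet : Set ℕ := {e | iterJump 1 e = 1}

/-- `COMPL(c)`: the oracles `X` such that the domain of `c(X)` computes the halting problem. -/
noncomputable def COMPL (c : CodeO) : Set Cantor := {X | TuringLEs HaltingSet (domSet c X)}

/-- Turing reducibility between total functions on ℕ. -/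
def TuringLEf (f g : ℕ → ℕ) : Prop := ∃ c : CodeO, ∀ n, c.eval g n = Part.some (f n)

/-- A real number viewed as an oracle, via its binary expansion. -/
noncomputable def realOracle (α : ℝ) : ℕ → ℕ := oX (digits α)

/-- Two reals have Turing-incomparable degrees. -/
noncomputable def TIncompReal (α β : ℝ) : Prop :=
  ¬ TuringLEf (realOracle α) (realOracle β) ∧ ¬ TuringLEf (realOracle β) (realOracle α)

/-! ### Arithmetical hierarchy -/

/-- Evaluation with the trivial (empty) oracle: ordinary partial recursion. -/
def eval0 (c : CodeO) : ℕ →. ℕ := c.eval fun _ => 0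

/-- `SigmaNumIdx n c` is the `Σ^0_{n+1}` subset of `ℕ` with index `c`. -/
def SigmaNumIdx : ℕ → CodeO → Set ℕ
  | 0, c => {m | (eval0 c m).Dom}
  | n + 1, c => {m | ∃ k, Nat.pair m k ∉ SigmaNumIdx n c}

/-- `S ⊆ ℕ` is `Σ^0_n` (intended for `n ≥ 1`). -/
def SigmaN (n : ℕ) (S : Set ℕ) : Prop := ∃ c : CodeO, S = SigmaNumIdx (n - 1) c

/-- The set of codes of the elements of a set of binary strings. -/
def strCodes (S : Set (List Bool)) : Set ℕ := {m | ∃ σ ∈ S, Encodable.encode σ = m}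

/-- A set of binary strings is `Σ^0_n`. -/
def SigmaStr (n : ℕ) (S : Set (List Bool)) : Prop := SigmaN n (strCodes S)

/-- A set of binary strings is `Π^0_n`: its complement is `Σ^0_n`. -/
def PiStr (n : ℕ) (S : Set (List Bool)) : Prop := SigmaStr n Sᶜ

/-- A set of binary strings is c.e. relative to the oracle `O`. -/
def CeStrIn (O : ℕ → ℕ) (S : Set (List Bool)) : Prop := CeIn O (strCodes S)

/-- `SigmaClassIdx n c m` is the `Σ^0_{n+1}` class of elements of Cantor space
with index `c` and parameter `m`. -/
def SigmaClassIdx : ℕ → CodeO → ℕ → Set Cantor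
  | 0, c, m => {X | (evalO X c m).Dom}
  | n + 1, c, m => {X | ∃ k, X ∉ SigmaClassIdx n c (Nat.pair m k)}

/-! ### Monotone machines -/

/-- A monotone machine: a partial computable, monotone map on finite binary strings. -/
structure MonoMachine where
  f : List Bool →. List Bool
  partrec : Partrec f
  mono : ∀ ⦃σ τ a b : List Bool⦄, σ <+: τ → a ∈ f σ → b ∈ f τ → a <+: b

/-- The oracles `X` such that the output of the monotone machine on `X` is infinite. -/
def MonoINF (M : MonoMachine) : Set Cantor :=
  {X | ∀ k, ∃ n a, a ∈ M.f (initSeg X n) ∧ k ≤ a.length}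

/-- The `k`-th bit of the output `M(X)` of a monotone machine is `b`. -/
def MonoMachine.hasBit (M : MonoMachine) (X : Cantor) (k : ℕ) (b : Bool) : Prop :=
  ∃ n a, a ∈ M.f (initSeg X n) ∧ a[k]? = some b

/-- `U` is a universal monotone machine. -/
def UniversalMono (U : MonoMachine) : Prop :=
  ∃ (M : ℕ → MonoMachine) (σ : ℕ → List Bool),
    Partrec₂ (fun (e : ℕ) (τ : List Bool) => (M e).f τ) ∧
    (∀ V : MonoMachine, ∃ e, (M e).f = V.f) ∧
    Computable σ ∧ IsPrefixFree (Set.range σ) ∧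
    ∀ e τ, U.f (σ e ++ τ) = (M e).f τ

/-! ### Infinitary self-delimiting machines -/

/-- Chaitin's infinitary self-delimiting machines: `f σ n` is the `n`-th approximation
of the output on program `σ` (`none` meaning divergence); the convergence relation is
decidable, approximations are monotone, and machines are self-delimiting. -/
structure InfMachine where
  f : List Bool → ℕ → Option (List Bool)
  computable : Computable₂ f
  mono : ∀ σ m n a, n < m → f σ m = some a → ∃ b, f σ n = some b ∧ b <+: a
  sd : ∀ σ τ n a, f σ n = some a → f (σ ++ τ) n = some a

/-- `M^∞(σ)↓`: all approximations converge. -/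
def InfMachine.domInf (M : InfMachine) (σ : List Bool) : Prop := ∀ n, M.f σ n ≠ none

/-- The domain of `M^∞`. -/
def InfMachine.DOM (M : InfMachine) : Set (List Bool) := {σ | M.domInf σ}

/-- The output `M^∞(σ)` is infinite (a stream). -/
def InfMachine.outInf (M : InfMachine) (σ : List Bool) : Prop :=
  ∀ k, ∃ n a, M.f σ n = some a ∧ k ≤ a.length

/-- `FIN(M^∞)`: programs in the domain with finite output. -/
def InfMachine.FIN (M : InfMachine) : Set (List Bool) := {σ | M.domInf σ ∧ ¬ M.outInf σ}

/-- `INF(M^∞)`: programs in the domain with infinite output. -/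
def InfMachine.INF (M : InfMachine) : Set (List Bool) := {σ | M.domInf σ ∧ M.outInf σ}

/-- The `k`-th bit of the output `M^∞(σ)` is `b`. -/
def InfMachine.hasBit (M : InfMachine) (σ : List Bool) (k : ℕ) (b : Bool) : Prop :=
  ∃ n a, M.f σ n = some a ∧ a[k]? = some b

/-- The domain of the prefix-free machine `M^*`: minimal strings in the domain of `M^∞`. -/
def InfMachine.DOMstar (M : InfMachine) : Set (List Bool) :=
  {σ | M.domInf σ ∧ ∀ τ, τ <+: σ → τ ≠ σ → ¬ M.domInf τ}

/-- Programs whose output is a stream with a tail of 1s. -/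
def InfMachine.COFout (M : InfMachine) : Set (List Bool) :=
  {σ | M.domInf σ ∧ M.outInf σ ∧ ∃ t, ∀ k, t ≤ k → M.hasBit σ k true}

/-- `A^∞(σ) ≃ B^∞(τ)`: both converge or both diverge, with equal outputs. -/
def InfAgree (A : InfMachine) (σ : List Bool) (B : InfMachine) (τ : List Bool) : Prop :=
  (A.domInf σ ↔ B.domInf τ) ∧ (A.domInf σ → ∀ k b, (A.hasBit σ k b ↔ B.hasBit τ k b))

/-- `U` is a universal infinitary self-delimiting machine. -/
def UniversalInf (U : InfMachine) : Prop :=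
  ∃ (M : ℕ → InfMachine) (σ : ℕ → List Bool),
    Computable (fun p : ℕ × List Bool × ℕ => (M p.1).f p.2.1 p.2.2) ∧
    (∀ V : InfMachine, ∃ e, ∀ τ, InfAgree (M e) τ V τ) ∧
    Computable σ ∧ IsPrefixFree (Set.range σ) ∧
    ∀ e τ, InfAgree U (σ e ++ τ) (M e) τ

end RandProb

namespace RandProb

open Nat.Partrec (Code)

/-! ### Embedding ordinary codes into oracle codes -/

/-- Ordinary codes as oracle codes. -/
def embC : Code → CodeO
  | .zero => .zero
  | .succ => .succ
  | .left => .left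
  | .right => .right
  | .pair a b => .pair (embC a) (embC b)
  | .comp a b => .comp (embC a) (embC b)
  | .prec a b => .prec (embC a) (embC b)
  | .rfind' a => .rfind' (embC a)

theorem eval_embC (O : ℕ → ℕ) (c : Code) : (embC c).eval O = c.eval := by
  induction c with
  | zero => rfl
  | succ => rfl
  | left => rfl
  | right => rfl
  | pair a b ha hb => simp only [embC, CodeO.eval, Code.eval, ha, hb]; rfl
  | comp a b ha hb => simp only [embC, CodeO.eval, Code.eval, ha, hb]; rfl
  | prec a b ha hb => simp only [embC, CodeO.eval, Code.eval, ha, hb]; rfl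
  | rfind' a ha => simp only [embC, CodeO.eval, Code.eval, ha]; rfl

/-- Oracle codes with trivial oracle as ordinary codes. -/
def toC : CodeO → Code
  | .zero => .zero
  | .succ => .succ
  | .left => .left
  | .right => .right
  | .oracle => .zero
  | .pair a b => .pair (toC a) (toC b)
  | .comp a b => .comp (toC a) (toC b)
  | .prec a b => .prec (toC a) (toC b)
  | .rfind' a => .rfind' (toC a)

theorem eval_toC (c : CodeO) : (toC c).eval = c.eval (fun _ => 0) := by
  induction c with
  | zero => rfl
  | succ => rfl
  | left => rfl
  | right => rfl
  | oracle => rfl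
  | pair a b ha hb => simp only [toC, CodeO.eval, Code.eval, ha, hb]; rfl
  | comp a b ha hb => simp only [toC, CodeO.eval, Code.eval, ha, hb]; rfl
  | prec a b ha hb => simp only [toC, CodeO.eval, Code.eval, ha, hb]; rfl
  | rfind' a ha => simp only [toC, CodeO.eval, Code.eval, ha]; rfl

/-- Translation on the level of numbers. -/
def tr : ℕ → Code
  | 0 => .zero
  | 1 => .succ
  | 2 => .left
  | 3 => .right
  | 4 => .zero
  | n + 5 =>
    have h0 : n / 4 < n + 5 := by omega
    have h1 : (n / 4).unpair.1 < n + 5 := lt_of_le_of_lt (Nat.unpair_left_le _) h0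
    have h2 : (n / 4).unpair.2 < n + 5 := lt_of_le_of_lt (Nat.unpair_right_le _) h0
    if n % 4 = 0 then .pair (tr (n / 4).unpair.1) (tr (n / 4).unpair.2)
    else if n % 4 = 1 then .prec (tr (n / 4).unpair.1) (tr (n / 4).unpair.2)
    else if n % 4 = 2 then .comp (tr (n / 4).unpair.1) (tr (n / 4).unpair.2)
    else .rfind' (tr (n / 4))

theorem tr_encode (c : CodeO) : tr c.encode = toC c := by
  induction c with
  | zero => simp [CodeO.encode, tr, toC]
  | succ => simp [CodeO.encode, tr, toC]
  | left => simp [CodeO.encode, tr, toC]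
  | right => simp [CodeO.encode, tr, toC]
  | oracle => simp [CodeO.encode, tr, toC]
  | pair a b ha hb =>
    have : (CodeO.pair a b).encode = 4 * Nat.pair a.encode b.encode + 5 := by
      simp only [CodeO.encode]; ring
    rw [this, tr]
    simp [ha, hb, toC]
  | prec a b ha hb =>
    have : (CodeO.prec a b).encode = (4 * Nat.pair a.encode b.encode + 1) + 5 := by
      simp only [CodeO.encode]; ring
    have e1 : (4 * Nat.pair a.encode b.encode + 1) % 4 = 1 := by omega
    have e2 : (4 * Nat.pair a.encode b.encode + 1) / 4 = Nat.pair a.encode b.encode := by omega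
    rw [this, tr]
    simp [e1, e2, ha, hb, toC]
  | comp a b ha hb =>
    have : (CodeO.comp a b).encode = (4 * Nat.pair a.encode b.encode + 2) + 5 := by
      simp only [CodeO.encode]; ring
    have e1 : (4 * Nat.pair a.encode b.encode + 2) % 4 = 2 := by omega
    have e2 : (4 * Nat.pair a.encode b.encode + 2) / 4 = Nat.pair a.encode b.encode := by omega
    rw [this, tr]
    simp [e1, e2, ha, hb, toC]
  | rfind' a ha =>
    have : (CodeO.rfind' a).encode = (4 * a.encode + 3) + 5 := by
      simp only [CodeO.encode]; ring
    have e1 : (4 * a.encode + 3) % 4 = 3 := by omega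
    have e2 : (4 * a.encode + 3) / 4 = a.encode := by omega
    rw [this, tr]
    simp [e1, e2, ha, toC]

theorem exists_encode (n : ℕ) : ∃ c : CodeO, c.encode = n := by
  induction n using Nat.strong_induction_on with
  | _ n ih =>
    by_cases hn : n < 5
    · interval_cases n
      exacts [⟨.zero, rfl⟩, ⟨.succ, rfl⟩, ⟨.left, rfl⟩, ⟨.right, rfl⟩, ⟨.oracle, rfl⟩]
    · obtain ⟨m, rfl⟩ : ∃ m, n = m + 5 := ⟨n - 5, by omega⟩
      have h0 : m / 4 < m + 5 := by omega
      obtain ⟨a, ha⟩ := ih _ (lt_of_le_of_lt (Nat.unpair_left_le (m / 4)) h0)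
      obtain ⟨b, hb⟩ := ih _ (lt_of_le_of_lt (Nat.unpair_right_le (m / 4)) h0)
      obtain ⟨d, hd⟩ := ih _ h0
      have hp : Nat.pair a.encode b.encode = m / 4 := by rw [ha, hb, Nat.pair_unpair]
      have : m % 4 = 0 ∨ m % 4 = 1 ∨ m % 4 = 2 ∨ m % 4 = 3 := by omega
      rcases this with h | h | h | h
      · exact ⟨.pair a b, by simp only [CodeO.encode, hp]; omega⟩
      · exact ⟨.prec a b, by simp only [CodeO.encode, hp]; omega⟩
      · exact ⟨.comp a b, by simp only [CodeO.encode, hp]; omega⟩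
      · exact ⟨.rfind' d, by simp only [CodeO.encode, hd]; omega⟩

/-- One step of the course-of-values recursion for `tr`. -/
def trStep (L : List Code) : Code :=
  if L.length = 0 then .zero
  else if L.length = 1 then .succ
  else if L.length = 2 then .left
  else if L.length = 3 then .right
  else if L.length = 4 then .zero
  else if (L.length - 5) % 4 = 0 then
    .pair (L.getD ((L.length - 5) / 4).unpair.1 .zero) (L.getD ((L.length - 5) / 4).unpair.2 .zero)
  else if (L.length - 5) % 4 = 1 then
    .prec (L.getD ((L.length - 5) / 4).unpair.1 .zero) (L.getD ((L.length - 5) / 4).unpair.2 .zero)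
  else if (L.length - 5) % 4 = 2 then
    .comp (L.getD ((L.length - 5) / 4).unpair.1 .zero) (L.getD ((L.length - 5) / 4).unpair.2 .zero)
  else .rfind' (L.getD ((L.length - 5) / 4) .zero)

theorem trStep_eq (n : ℕ) : trStep ((List.range n).map tr) = tr n := by
  unfold trStep
  match n with
  | 0 => simp [tr]
  | 1 => simp [tr]
  | 2 => simp [tr]
  | 3 => simp [tr]
  | 4 => simp [tr]
  | n + 5 =>
    have h0 : n / 4 < n + 5 := by omega
    have h1 : (n / 4).unpair.1 < n + 5 := lt_of_le_of_lt (Nat.unpair_left_le _) h0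
    have h2 : (n / 4).unpair.2 < n + 5 := lt_of_le_of_lt (Nat.unpair_right_le _) h0
    rw [tr]
    simp [List.getD, h0, h1, h2, -List.map_append]

theorem primrec_trStep : Primrec trStep := by
  have hl : Primrec (fun L : List Code => L.length) := Primrec.list_length
  have he : ∀ k, PrimrecPred (fun L : List Code => L.length = k) := fun k =>
    Primrec.eq.comp hl (Primrec.const k)
  have hs : Primrec (fun L : List Code => L.length - 5) :=
    Primrec.nat_sub.comp hl (Primrec.const 5)
  have hm : ∀ k, PrimrecPred (fun L : List Code => (L.length - 5) % 4 = k) := fun k =>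
    Primrec.eq.comp (Primrec.nat_mod.comp hs (Primrec.const 4)) (Primrec.const k)
  have hd : Primrec (fun L : List Code => (L.length - 5) / 4) :=
    Primrec.nat_div.comp hs (Primrec.const 4)
  have hu := Primrec.unpair.comp hd
  have g1 : Primrec (fun L : List Code => L.getD ((L.length - 5) / 4).unpair.1 .zero) :=
    (Primrec.list_getD Code.zero).comp Primrec.id (Primrec.fst.comp hu)
  have g2 : Primrec (fun L : List Code => L.getD ((L.length - 5) / 4).unpair.2 .zero) :=
    (Primrec.list_getD Code.zero).comp Primrec.id (Primrec.snd.comp hu)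
  have g0 : Primrec (fun L : List Code => L.getD ((L.length - 5) / 4) .zero) :=
    (Primrec.list_getD Code.zero).comp Primrec.id hd
  exact Primrec.ite (he 0) (Primrec.const _) <| Primrec.ite (he 1) (Primrec.const _) <|
    Primrec.ite (he 2) (Primrec.const _) <| Primrec.ite (he 3) (Primrec.const _) <|
    Primrec.ite (he 4) (Primrec.const _) <|
    Primrec.ite (hm 0) (Code.primrec₂_pair.comp g1 g2) <|
    Primrec.ite (hm 1) (Code.primrec₂_prec.comp g1 g2) <|
    Primrec.ite (hm 2) (Code.primrec₂_comp.comp g1 g2) <|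
    Code.primrec_rfind'.comp g0

theorem primrec_tr : Primrec tr := by
  have : Primrec₂ (fun (_ : ℕ) n => tr n) :=
    Primrec.nat_strong_rec (g := fun _ L => some (trStep L)) _
      (Primrec.option_some.comp (primrec_trStep.comp Primrec.snd)).to₂
      (fun _ n => by rw [trStep_eq])
  exact this.comp (Primrec.const 0) Primrec.id

theorem iterJump_one (e : ℕ) :
    (iterJump 1 e = 1 ∧ ∃ k, (Code.evaln k (tr e) e).isSome) ∨
    (iterJump 1 e = 0 ∧ ∀ k, ¬ (Code.evaln k (tr e) e).isSome) := by
  have key : (∃ c : CodeO, c.encode = e ∧ (c.eval (fun _ => 0) e).Dom) ↔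
      ∃ k, (Code.evaln k (tr e) e).isSome := by
    obtain ⟨c, rfl⟩ := exists_encode e
    have : ((tr c.encode).eval c.encode).Dom ↔ ∃ k, (Code.evaln k (tr c.encode) c.encode).isSome := by
      rw [Part.dom_iff_mem]
      simp only [Code.evaln_complete, Option.isSome_iff_exists, Option.mem_def]
      exact exists_comm
    rw [← this]
    constructor
    · rintro ⟨d, hd, h⟩
      rw [← hd, tr_encode, eval_toC, hd]; exact h
    · intro h
      rw [tr_encode, eval_toC] at h
      exact ⟨c, rfl, h⟩
  have h1 : iterJump 1 e = jump (fun _ => 0) e := rfl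
  by_cases h : ∃ k, (Code.evaln k (tr e) e).isSome
  · left
    refine ⟨?_, h⟩
    rw [h1, jump, if_pos (key.2 h)]
  · right
    refine ⟨?_, fun k hk => h ⟨k, hk⟩⟩
    rw [h1, jump, if_neg (fun hh => h (key.1 hh))]

/-! ### Sigma-2 predicates -/

/-- Σ₂ predicates. -/
def S2 {β : Type} [Primcodable β] (P : β → Prop) : Prop :=
  ∃ R : β → ℕ → ℕ → Prop,
    PrimrecPred (fun x : (β × ℕ) × ℕ => R x.1.1 x.1.2 x.2) ∧ ∀ a, P a ↔ ∃ s, ∀ t, R a s t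

section
variable {β γ : Type} [Primcodable β] [Primcodable γ]

theorem forall_lt_rel {R : ℕ → β → Prop} (hf : PrimrecRel R) :
    PrimrecRel fun n y ↦ ∀ x < n, R x y :=
  (hf.forall_mem_list.comp (Primrec.list_range.comp Primrec.fst) Primrec.snd).of_eq (by simp)

theorem exists_lt_rel {R : ℕ → β → Prop} (hf : PrimrecRel R) :
    PrimrecRel fun n y ↦ ∃ x < n, R x y :=
  (hf.exists_mem_list.comp (Primrec.list_range.comp Primrec.fst) Primrec.snd).of_eq (by simp)

theorem S2.of_iff {P Q : β → Prop} (h : S2 P) (e : ∀ a, Q a ↔ P a) : S2 Q := by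
  obtain ⟨R, hR, h⟩ := h
  exact ⟨R, hR, fun a => (e a).trans (h a)⟩

theorem S2.comp {P : β → Prop} (h : S2 P) {f : γ → β} (hf : Primrec f) :
    S2 (fun a => P (f a)) := by
  obtain ⟨R, hR, h⟩ := h
  refine ⟨fun a => R (f a), ?_, fun a => h (f a)⟩
  exact hR.comp (f := fun x : (γ × ℕ) × ℕ => ((f x.1.1, x.1.2), x.2))
    (Primrec.pair (Primrec.pair (hf.comp (Primrec.fst.comp Primrec.fst))
      (Primrec.snd.comp Primrec.fst)) Primrec.snd)

theorem S2.of_primrec {P : β → Prop} (h : PrimrecPred P) : S2 P :=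
  ⟨fun a _ _ => P a, h.comp (Primrec.fst.comp Primrec.fst), fun a => by simp⟩

theorem S2.and {P Q : β → Prop} (hP : S2 P) (hQ : S2 Q) : S2 (fun a => P a ∧ Q a) := by
  obtain ⟨R, hR, h⟩ := hP
  obtain ⟨R', hR', h'⟩ := hQ
  refine ⟨fun a s t => R a s.unpair.1 t ∧ R' a s.unpair.2 t, ?_, fun a => ?_⟩
  · have hu : Primrec (fun x : (β × ℕ) × ℕ => x.1.2.unpair) :=
      Primrec.unpair.comp (Primrec.snd.comp Primrec.fst)
    exact (hR.comp (f := fun x : (β × ℕ) × ℕ => ((x.1.1, x.1.2.unpair.1), x.2))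
      (Primrec.pair (Primrec.pair (Primrec.fst.comp Primrec.fst) (Primrec.fst.comp hu))
        Primrec.snd)).and
      (hR'.comp (f := fun x : (β × ℕ) × ℕ => ((x.1.1, x.1.2.unpair.2), x.2))
      (Primrec.pair (Primrec.pair (Primrec.fst.comp Primrec.fst) (Primrec.snd.comp hu))
        Primrec.snd))
  · simp only [h, h']
    constructor
    · rintro ⟨⟨s, hs⟩, s', hs'⟩
      exact ⟨Nat.pair s s', fun t => by simpa using ⟨hs t, hs' t⟩⟩
    · rintro ⟨s, hs⟩
      exact ⟨⟨_, fun t => (hs t).1⟩, _, fun t => (hs t).2⟩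

theorem S2.or {P Q : β → Prop} (hP : S2 P) (hQ : S2 Q) : S2 (fun a => P a ∨ Q a) := by
  obtain ⟨R, hR, h⟩ := hP
  obtain ⟨R', hR', h'⟩ := hQ
  refine ⟨fun a s t => (s.unpair.1 = 0 ∧ R a s.unpair.2 t) ∨ (¬ s.unpair.1 = 0 ∧ R' a s.unpair.2 t),
    ?_, fun a => ?_⟩
  · have hu : Primrec (fun x : (β × ℕ) × ℕ => x.1.2.unpair) :=
      Primrec.unpair.comp (Primrec.snd.comp Primrec.fst)
    have hf : Primrec (fun x : (β × ℕ) × ℕ => ((x.1.1, x.1.2.unpair.2), x.2)) :=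
      (Primrec.pair (Primrec.pair (Primrec.fst.comp Primrec.fst) (Primrec.snd.comp hu))
        Primrec.snd)
    have hz : PrimrecPred (fun x : (β × ℕ) × ℕ => x.1.2.unpair.1 = 0) :=
      Primrec.eq.comp (Primrec.fst.comp hu) (Primrec.const 0)
    exact (hz.and (hR.comp hf)).or (hz.not.and (hR'.comp hf))
  · simp only [h, h']
    constructor
    · rintro (⟨s, hs⟩ | ⟨s, hs⟩)
      · exact ⟨Nat.pair 0 s, fun t => by simpa using hs t⟩
      · exact ⟨Nat.pair 1 s, fun t => by simpa using hs t⟩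
    · rintro ⟨s, hs⟩
      by_cases hz : s.unpair.1 = 0
      · left; exact ⟨s.unpair.2, fun t => by simpa [hz] using hs t⟩
      · right; exact ⟨s.unpair.2, fun t => by simpa [hz] using hs t⟩

theorem S2.ex {P : β × ℕ → Prop} (hP : S2 P) : S2 (fun a => ∃ n, P (a, n)) := by
  obtain ⟨R, hR, h⟩ := hP
  refine ⟨fun a s t => R (a, s.unpair.1) s.unpair.2 t, ?_, fun a => ?_⟩
  · have hu : Primrec (fun x : (β × ℕ) × ℕ => x.1.2.unpair) :=
      Primrec.unpair.comp (Primrec.snd.comp Primrec.fst)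
    exact hR.comp (f := fun x : (β × ℕ) × ℕ => (((x.1.1, x.1.2.unpair.1), x.1.2.unpair.2), x.2))
      (Primrec.pair (Primrec.pair (Primrec.pair (Primrec.fst.comp Primrec.fst)
        (Primrec.fst.comp hu)) (Primrec.snd.comp hu)) Primrec.snd)
  · simp only [h]
    constructor
    · rintro ⟨n, s, hs⟩
      exact ⟨Nat.pair n s, fun t => by simpa using hs t⟩
    · rintro ⟨s, hs⟩
      exact ⟨_, _, hs⟩

theorem S2.exL {P : β × List ℕ → Prop} (hP : S2 P) : S2 (fun a => ∃ l, P (a, l)) := by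
  have h1 : S2 (fun x : β × ℕ => P (x.1, Denumerable.ofNat (List ℕ) x.2)) :=
    hP.comp (Primrec.pair Primrec.fst ((Primrec.ofNat (List ℕ)).comp Primrec.snd))
  refine h1.ex.of_iff fun a => ?_
  constructor
  · rintro ⟨l, hl⟩
    exact ⟨Encodable.encode l, by simpa using hl⟩
  · rintro ⟨n, hn⟩
    exact ⟨_, hn⟩

theorem S2.ball {P : β × ℕ → Prop} (hP : S2 P) {f : β → ℕ} (hf : Primrec f) :
    S2 (fun a => ∀ i < f a, P (a, i)) := by
  obtain ⟨R, hR, h⟩ := hP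
  have h1 : S2 (fun x : β × List ℕ => ∀ t, ∀ i < f x.1, R (x.1, i) (x.2.getD i 0) t) := by
    refine ⟨fun x _ t => ∀ i < f x.1, R (x.1, i) (x.2.getD i 0) t, ?_, fun a => by simp⟩
    have hr : PrimrecRel (fun (i : ℕ) (y : ((β × List ℕ) × ℕ) × ℕ) =>
        R (y.1.1.1, i) (y.1.1.2.getD i 0) y.2) := by
      have e1 : Primrec (fun z : ℕ × (((β × List ℕ) × ℕ) × ℕ) => z.2.1.1) :=
        Primrec.fst.comp (Primrec.fst.comp Primrec.snd)
      exact hR.comp (f := fun z : ℕ × (((β × List ℕ) × ℕ) × ℕ) =>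
          (((z.2.1.1.1, z.1), z.2.1.1.2.getD z.1 0), z.2.2))
        (Primrec.pair (Primrec.pair (Primrec.pair (Primrec.fst.comp e1) Primrec.fst)
          ((Primrec.list_getD 0).comp (Primrec.snd.comp e1) Primrec.fst))
          (Primrec.snd.comp Primrec.snd))
    have hr' := forall_lt_rel hr
    exact PrimrecRel.comp hr' (f := fun y : ((β × List ℕ) × ℕ) × ℕ => f y.1.1.1) (g := fun y => y)
      (hf.comp (Primrec.fst.comp (Primrec.fst.comp Primrec.fst))) Primrec.id
  refine h1.exL.of_iff fun a => ?_
  simp only [h]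
  constructor
  · intro hh
    choose! s hs using hh
    refine ⟨(List.range (f a)).map s, fun t i hi => ?_⟩
    simpa [List.getD, hi] using hs i hi t
  · rintro ⟨l, hl⟩ i hi
    exact ⟨_, fun t => hl t i hi⟩

end

end RandProb

namespace RandProb

open Nat.Partrec (Code)

theorem S2_oracle : S2 (fun x : ℕ × ℕ => x.2 ∈ (CodeO.oracle.eval (iterJump 1) x.1)) := by
  have hev : PrimrecPred (fun z : ((ℕ × ℕ) × ℕ) × ℕ =>
      (Code.evaln z.2 (tr z.1.1.1) z.1.1.1).isSome = true) := by
    have e1 : Primrec (fun z : ((ℕ × ℕ) × ℕ) × ℕ => z.1.1.1) :=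
      Primrec.fst.comp (Primrec.fst.comp Primrec.fst)
    exact Primrec.eq.comp (Primrec.option_isSome.comp (Code.primrec_evaln.comp
      (Primrec.pair (Primrec.pair Primrec.snd (primrec_tr.comp e1)) e1))) (Primrec.const true)
  have hev2 : PrimrecPred (fun z : ((ℕ × ℕ) × ℕ) =>
      (Code.evaln z.2 (tr z.1.1) z.1.1).isSome = true) := by
    have e1 : Primrec (fun z : ((ℕ × ℕ) × ℕ) => z.1.1) :=
      Primrec.fst.comp Primrec.fst
    exact Primrec.eq.comp (Primrec.option_isSome.comp (Code.primrec_evaln.comp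
      (Primrec.pair (Primrec.pair Primrec.snd (primrec_tr.comp e1)) e1))) (Primrec.const true)
  have hz : S2 (fun x : ℕ × ℕ => ∀ k, ¬ (Code.evaln k (tr x.1) x.1).isSome = true) :=
    ⟨fun x _ t => ¬ (Code.evaln t (tr x.1) x.1).isSome = true, hev.not, fun a => by simp⟩
  have ho : S2 (fun x : ℕ × ℕ => ∃ k, (Code.evaln k (tr x.1) x.1).isSome = true) :=
    (S2.of_primrec hev2).ex
  have h0 : S2 (fun x : ℕ × ℕ => x.2 = 0) :=
    S2.of_primrec (Primrec.eq.comp Primrec.snd (Primrec.const 0))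
  have h1 : S2 (fun x : ℕ × ℕ => x.2 = 1) :=
    S2.of_primrec (Primrec.eq.comp Primrec.snd (Primrec.const 1))
  refine ((h1.and ho).or (h0.and hz)).of_iff fun a => ?_
  have : a.2 ∈ (CodeO.oracle.eval (iterJump 1) a.1) ↔ a.2 = iterJump 1 a.1 := by
    simp [CodeO.eval]
  rw [this]
  rcases iterJump_one a.1 with ⟨h, hk⟩ | ⟨h, hk⟩
  · rw [h]
    constructor
    · intro e; exact Or.inl ⟨e, hk⟩
    · rintro (⟨e, _⟩ | ⟨_, e⟩)
      · exact e
      · obtain ⟨k, hk⟩ := hk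
        exact absurd hk (e k)
  · rw [h]
    constructor
    · intro e; exact Or.inr ⟨e, hk⟩
    · rintro (⟨_, k, e⟩ | ⟨e, _⟩)
      · exact absurd e (hk k)
      · exact e

theorem mem_prec_iff {O : ℕ → ℕ} {cf cg : CodeO} {x v : ℕ} :
    v ∈ (CodeO.prec cf cg).eval O x ↔ ∃ l : List ℕ, l.getD 0 0 ∈ cf.eval O x.unpair.1 ∧
      l.getD x.unpair.2 0 = v ∧ ∀ i < x.unpair.2,
        l.getD (i + 1) 0 ∈ cg.eval O (Nat.pair x.unpair.1 (Nat.pair i (l.getD i 0))) := by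
  simp only [CodeO.eval, Nat.unpaired]
  generalize x.unpair.1 = a
  generalize x.unpair.2 = n
  constructor
  · intro h
    suffices h' : ∃ f : ℕ → ℕ, f 0 ∈ cf.eval O a ∧ f n = v ∧ ∀ i < n,
        f (i + 1) ∈ cg.eval O (Nat.pair a (Nat.pair i (f i))) by
      obtain ⟨f, h0, hn, hs⟩ := h'
      have hg : ∀ i ≤ n, ((List.range (n + 1)).map f).getD i 0 = f i := by
        intro i hi
        have : i < n + 1 := by omega
        simp [List.getD, this, -List.map_append]
      refine ⟨(List.range (n + 1)).map f, ?_, ?_, fun i hi => ?_⟩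
      · rw [hg 0 (Nat.zero_le _)]; exact h0
      · rw [hg n le_rfl]; exact hn
      · rw [hg _ hi, hg _ hi.le]; exact hs i hi
    induction n generalizing v with
    | zero => exact ⟨fun _ => v, h, rfl, fun i hi => absurd hi (Nat.not_lt_zero _)⟩
    | succ n ih =>
      obtain ⟨w, hw, hv⟩ := Part.mem_bind_iff.1 h
      obtain ⟨f, h0, hn, hs⟩ := ih hw
      refine ⟨fun i => if i ≤ n then f i else v, by simpa using h0, by simp, fun i hi => ?_⟩
      have hi' : i ≤ n := by omega
      by_cases hin : i + 1 ≤ n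
      · simp only [hi', hin, if_true]
        exact hs i (by omega)
      · have : i = n := by omega
        subst this
        simp only [hin, if_false, le_refl, if_true, hn]
        exact hv
  · rintro ⟨l, h0, hn, hs⟩
    induction n generalizing v with
    | zero => rw [← hn]; exact h0
    | succ n ih =>
      refine Part.mem_bind_iff.2 ⟨l.getD n 0, ih rfl (fun i hi => hs i (by omega)), ?_⟩
      rw [← hn]
      exact hs n (by omega)

theorem mem_rfind_iff {O : ℕ → ℕ} {cf : CodeO} {x v : ℕ} :
    v ∈ (CodeO.rfind' cf).eval O x ↔ ∃ n, n + x.unpair.2 = v ∧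
      0 ∈ cf.eval O (Nat.pair x.unpair.1 (n + x.unpair.2)) ∧
      ∀ i < n, ∃ w, w + 1 ∈ cf.eval O (Nat.pair x.unpair.1 (i + x.unpair.2)) := by
  simp only [CodeO.eval, Nat.unpaired, Part.mem_map_iff]
  constructor
  · rintro ⟨n, hn, rfl⟩
    obtain ⟨h0, hs⟩ := Nat.mem_rfind.1 hn
    refine ⟨n, rfl, ?_, fun i hi => ?_⟩
    · obtain ⟨w, hw, e⟩ := (Part.mem_map_iff _).1 h0
      have : w = 0 := by simpa using e
      exact this ▸ hw
    · obtain ⟨w, hw, e⟩ := (Part.mem_map_iff _).1 (hs hi)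
      have : w ≠ 0 := by simpa using e
      obtain ⟨u, rfl⟩ := Nat.exists_eq_succ_of_ne_zero this
      exact ⟨u, hw⟩
  · rintro ⟨n, rfl, h0, hs⟩
    refine ⟨n, Nat.mem_rfind.2 ⟨(Part.mem_map_iff _).2 ⟨0, h0, by simp⟩, fun {i} hi => ?_⟩, rfl⟩
    obtain ⟨w, hw⟩ := hs i hi
    exact (Part.mem_map_iff _).2 ⟨w + 1, hw, by simp⟩

theorem S2_graph (c : CodeO) :
    S2 (fun x : ℕ × ℕ => x.2 ∈ (c.eval (iterJump 1) x.1)) := by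
  induction c with
  | zero =>
    refine (S2.of_primrec (P := fun x : ℕ × ℕ => x.2 = 0)
      (Primrec.eq.comp Primrec.snd (Primrec.const 0))).of_iff fun a => ?_
    simp [CodeO.eval, pure, PFun.pure]
  | succ =>
    refine (S2.of_primrec (P := fun x : ℕ × ℕ => x.2 = x.1.succ)
      (Primrec.eq.comp Primrec.snd (Primrec.succ.comp Primrec.fst))).of_iff fun a => ?_
    simp [CodeO.eval]
  | left =>
    refine (S2.of_primrec (P := fun x : ℕ × ℕ => x.2 = x.1.unpair.1)
      (Primrec.eq.comp Primrec.snd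
        (Primrec.fst.comp (Primrec.unpair.comp Primrec.fst)))).of_iff fun a => ?_
    simp [CodeO.eval]
  | right =>
    refine (S2.of_primrec (P := fun x : ℕ × ℕ => x.2 = x.1.unpair.2)
      (Primrec.eq.comp Primrec.snd
        (Primrec.snd.comp (Primrec.unpair.comp Primrec.fst)))).of_iff fun a => ?_
    simp [CodeO.eval]
  | oracle => exact S2_oracle
  | pair cf cg hf hg =>
    have h1 := hf.comp (f := fun x : ℕ × ℕ => (x.1, x.2.unpair.1))
      (Primrec.pair Primrec.fst (Primrec.fst.comp (Primrec.unpair.comp Primrec.snd)))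
    have h2 := hg.comp (f := fun x : ℕ × ℕ => (x.1, x.2.unpair.2))
      (Primrec.pair Primrec.fst (Primrec.snd.comp (Primrec.unpair.comp Primrec.snd)))
    refine (h1.and h2).of_iff fun a => ?_
    simp only [CodeO.eval, Seq.seq]
    simp only [Part.map_eq_map, Part.bind_map, Part.bind_eq_bind, Part.mem_bind_iff,
      Part.mem_map_iff]
    constructor
    · rintro ⟨u, hu, w, hw, e⟩
      rw [← e]; simpa using ⟨hu, hw⟩
    · rintro ⟨h1, h2⟩
      exact ⟨_, h1, _, h2, by simp⟩
  | comp cf cg hf hg =>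
    have h1 := hf.comp (f := fun x : (ℕ × ℕ) × ℕ => (x.2, x.1.2))
      (Primrec.pair Primrec.snd (Primrec.snd.comp Primrec.fst))
    have h2 := hg.comp (f := fun x : (ℕ × ℕ) × ℕ => (x.1.1, x.2))
      (Primrec.pair (Primrec.fst.comp Primrec.fst) Primrec.snd)
    refine (h2.and h1).ex.of_iff fun a => ?_
    exact Part.mem_bind_iff
  | prec cf cg hf hg =>
    have hl : Primrec (fun y : (ℕ × ℕ) × List ℕ => y.2) := Primrec.snd
    have hu : Primrec (fun y : (ℕ × ℕ) × List ℕ => y.1.1.unpair) :=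
      Primrec.unpair.comp (Primrec.fst.comp Primrec.fst)
    have h1 := hf.comp (f := fun y : (ℕ × ℕ) × List ℕ => (y.1.1.unpair.1, y.2.getD 0 0))
      (Primrec.pair (Primrec.fst.comp hu) ((Primrec.list_getD 0).comp hl (Primrec.const 0)))
    have h2 : S2 (fun y : (ℕ × ℕ) × List ℕ => y.2.getD y.1.1.unpair.2 0 = y.1.2) :=
      S2.of_primrec (Primrec.eq.comp ((Primrec.list_getD 0).comp hl (Primrec.snd.comp hu))
        (Primrec.snd.comp Primrec.fst))
    have h3 := hg.comp (f := fun z : ((ℕ × ℕ) × List ℕ) × ℕ =>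
        (Nat.pair z.1.1.1.unpair.1 (Nat.pair z.2 (z.1.2.getD z.2 0)), z.1.2.getD (z.2 + 1) 0))
      (Primrec.pair
        (Primrec₂.natPair.comp (Primrec.fst.comp (hu.comp Primrec.fst))
          (Primrec₂.natPair.comp Primrec.snd
            ((Primrec.list_getD 0).comp (hl.comp Primrec.fst) Primrec.snd)))
        ((Primrec.list_getD 0).comp (hl.comp Primrec.fst) (Primrec.succ.comp Primrec.snd)))
    have h4 := h3.ball (f := fun y : (ℕ × ℕ) × List ℕ => y.1.1.unpair.2) (Primrec.snd.comp hu)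
    refine (h1.and (h2.and h4)).exL.of_iff fun a => ?_
    exact mem_prec_iff
  | rfind' cf hf =>
    have hu : Primrec (fun y : (ℕ × ℕ) × ℕ => y.1.1.unpair) :=
      Primrec.unpair.comp (Primrec.fst.comp Primrec.fst)
    have hn : Primrec (fun y : (ℕ × ℕ) × ℕ => y.2 + y.1.1.unpair.2) :=
      Primrec.nat_add.comp Primrec.snd (Primrec.snd.comp hu)
    have h1 : S2 (fun y : (ℕ × ℕ) × ℕ => y.2 + y.1.1.unpair.2 = y.1.2) :=
      S2.of_primrec (Primrec.eq.comp hn (Primrec.snd.comp Primrec.fst))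
    have h2 := hf.comp (f := fun y : (ℕ × ℕ) × ℕ =>
        (Nat.pair y.1.1.unpair.1 (y.2 + y.1.1.unpair.2), 0))
      (Primrec.pair (Primrec₂.natPair.comp (Primrec.fst.comp hu) hn) (Primrec.const 0))
    have hu' : Primrec (fun z : (((ℕ × ℕ) × ℕ) × ℕ) × ℕ => z.1.1.1.1.unpair) :=
      hu.comp (Primrec.fst.comp Primrec.fst)
    have h3 := hf.comp (f := fun z : (((ℕ × ℕ) × ℕ) × ℕ) × ℕ =>
        (Nat.pair z.1.1.1.1.unpair.1 (z.1.2 + z.1.1.1.1.unpair.2), z.2 + 1))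
      (Primrec.pair (Primrec₂.natPair.comp (Primrec.fst.comp hu')
        (Primrec.nat_add.comp (Primrec.snd.comp Primrec.fst) (Primrec.snd.comp hu')))
        (Primrec.succ.comp Primrec.snd))
    have h4 := h3.ex.ball (f := fun y : (ℕ × ℕ) × ℕ => y.2) Primrec.snd
    refine (h1.and (h2.and h4)).ex.of_iff fun a => ?_
    exact mem_rfind_iff

theorem S2_of_ceIn {S : Set ℕ} (h : CeIn (iterJump 1) S) : S2 (fun m => m ∈ S) := by
  obtain ⟨c, rfl⟩ := h
  exact (S2_graph c).ex.of_iff fun a => Part.dom_iff_mem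

end RandProb

namespace RandProb

open Nat.Partrec (Code)

theorem exists_codeP {f : ℕ →. ℕ} (hf : Partrec f) : ∃ c : CodeO, ∀ O, c.eval O = f := by
  obtain ⟨c, hc⟩ := Code.exists_code.1 (Partrec.nat_iff.1 hf)
  exact ⟨embC c, fun O => (eval_embC O c).trans hc⟩

theorem exists_codeF {f : ℕ → ℕ} (hf : Primrec f) :
    ∃ c : CodeO, ∀ O n, c.eval O n = Part.some (f n) := by
  obtain ⟨c, hc⟩ := exists_codeP hf.to_comp.partrec
  exact ⟨c, fun O n => by rw [hc]; rfl⟩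

theorem eval_comp_some {O : ℕ → ℕ} {cf cg : CodeO} {n m : ℕ} (h : cg.eval O n = Part.some m) :
    (CodeO.comp cf cg).eval O n = cf.eval O m := by
  have : (CodeO.comp cf cg).eval O n = (cg.eval O n).bind (fun k => cf.eval O k) := rfl
  rw [this, h, Part.bind_some]

theorem eval_pair_some {O : ℕ → ℕ} {cf cg : CodeO} {n a b : ℕ} (hf : cf.eval O n = Part.some a)
    (hg : cg.eval O n = Part.some b) :
    (CodeO.pair cf cg).eval O n = Part.some (Nat.pair a b) := by
  have : (CodeO.pair cf cg).eval O n =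
    ((cf.eval O n).map Nat.pair).bind (fun f => (cg.eval O n).map f) := rfl
  rw [this, hf, hg]
  simp

/-- The number whose binary expansion is the length-`n` prefix of `X`. -/
def val (X : Cantor) : ℕ → ℕ
  | 0 => 0
  | n + 1 => 2 * val X n + oX X n

theorem exists_valCode : ∃ c : CodeO, ∀ X n, c.eval (oX X) (Nat.pair 0 n) = Part.some (val X n) := by
  obtain ⟨a, ha⟩ := exists_codeF (f := fun p => 2 * p.unpair.2 + p.unpair.1)
    (Primrec.nat_add.comp (Primrec.nat_mul.comp (Primrec.const 2)
      (Primrec.snd.comp Primrec.unpair)) (Primrec.fst.comp Primrec.unpair))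
  refine ⟨.prec .zero (.comp a (.pair (.comp .oracle (.comp .left .right)) (.comp .right .right))),
    fun X n => ?_⟩
  induction n with
  | zero =>
    simp only [CodeO.eval, Nat.unpaired, Nat.unpair_pair]
    rfl
  | succ n ih =>
    have step : ∀ cf cg : CodeO, (CodeO.prec cf cg).eval (oX X) (Nat.pair 0 (n + 1)) =
        ((CodeO.prec cf cg).eval (oX X) (Nat.pair 0 n)).bind
          (fun i => cg.eval (oX X) (Nat.pair 0 (Nat.pair n i))) := by
      intro cf cg
      simp only [CodeO.eval, Nat.unpaired, Nat.unpair_pair]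
      rfl
    rw [step, ih, Part.bind_some]
    have hr : CodeO.right.eval (oX X) (Nat.pair 0 (Nat.pair n (val X n))) =
        Part.some (Nat.pair n (val X n)) := by simp [CodeO.eval]
    have hl2 : CodeO.left.eval (oX X) (Nat.pair n (val X n)) = Part.some n := by simp [CodeO.eval]
    have hr2 : CodeO.right.eval (oX X) (Nat.pair n (val X n)) = Part.some (val X n) := by
      simp [CodeO.eval]
    have ho : CodeO.oracle.eval (oX X) n = Part.some (oX X n) := by simp [CodeO.eval]
    rw [eval_comp_some (eval_pair_some
      ((eval_comp_some ((eval_comp_some hr).trans hl2)).trans ho) ((eval_comp_some hr).trans hr2)),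
      ha]
    simp [val]

theorem exists_machine (c : ℕ) {Q : ℕ → ℕ → ℕ → Prop}
    (hQ : PrimrecPred (fun x : (ℕ × ℕ) × ℕ => Q x.1.1 x.1.2 x.2)) :
    ∃ M : CodeO, ∀ X n, (evalO X M n).Dom ↔ ∃ t, Q n (val X (n + c + 1)) t := by
  obtain ⟨v, hv⟩ := exists_valCode
  obtain ⟨i, hi⟩ := exists_codeF (f := fun n => n) Primrec.id
  obtain ⟨z, hz⟩ := exists_codeF (f := fun n => Nat.pair 0 (n + c + 1))
    (Primrec₂.natPair.comp (Primrec.const 0)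
      (Primrec.succ.comp (Primrec.nat_add.comp Primrec.id (Primrec.const c))))
  have hQ' : Primrec₂ (fun p t : ℕ => decide (Q p.unpair.1 p.unpair.2 t)) := by
    have := hQ.comp (f := fun x : ℕ × ℕ => (x.1.unpair, x.2))
      (Primrec.pair (Primrec.unpair.comp Primrec.fst) Primrec.snd)
    exact this.decide
  obtain ⟨g, hg⟩ := exists_codeP (Partrec.rfind hQ'.to_comp.partrec₂)
  refine ⟨.comp g (.pair i (.comp v z)), fun X n => ?_⟩
  have : evalO X (.comp g (.pair i (.comp v z))) n = g.eval (oX X) (Nat.pair n (val X (n + c + 1))) := by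
    exact eval_comp_some (eval_pair_some (hi _ _) ((eval_comp_some (hz _ _)).trans (hv _ _)))
  rw [this, hg]
  simp only [Nat.rfind_dom]
  constructor
  · rintro ⟨t, ht, _⟩
    exact ⟨t, by simpa using ht⟩
  · rintro ⟨t, ht⟩
    exact ⟨t, by simpa using ht, fun _ => trivial⟩

theorem oX_le (X : Cantor) (n : ℕ) : oX X n ≤ 1 := by
  unfold oX; cases X n <;> simp

theorem val_div (X : Cantor) (m d : ℕ) : val X (m + d) / 2 ^ d = val X m := by
  induction d with
  | zero => simp
  | succ d ih =>
    rw [pow_succ', ← Nat.div_div_eq_div_mul, ← ih]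
    congr 1
    have := oX_le X (m + d)
    rw [← add_assoc, val]; omega

theorem primrec_two_pow : Primrec (fun n : ℕ => 2 ^ n) := by
  have : Primrec (fun n : ℕ => Nat.rec (motive := fun _ => ℕ) 1 (fun _ r => 2 * r) n) :=
    Primrec.nat_rec₁ 1 (Primrec.nat_mul.comp (Primrec.const 2) Primrec.snd).to₂
  refine this.of_eq fun n => ?_
  induction n with
  | zero => rfl
  | succ n ih => simp only [ih, pow_succ']

theorem encode_dyadic (a k : ℕ) (ha : a % 2 = 1) (α : ℝ) :
    (Nat.pair (2 * a) (2 ^ k) ∈ {m | ∃ q : ℚ, Encodable.encode q = m ∧ α < (q : ℝ)}) ↔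
      α < (a : ℝ) / 2 ^ k := by
  have hcop : (a : ℤ).natAbs.Coprime (2 ^ k) := by
    rw [Int.natAbs_natCast]
    apply Nat.Coprime.pow_right
    exact Nat.coprime_two_right.2 (Nat.odd_iff.2 ha)
  let q : ℚ := ⟨(a : ℤ), 2 ^ k, by positivity, hcop⟩
  have hq : Encodable.encode q = Nat.pair (2 * a) (2 ^ k) := by
    have : Encodable.encode q = Nat.pair (Encodable.encode (a : ℤ)) (2 ^ k) := rfl
    rw [this]
    rfl
  have hv : (q : ℝ) = (a : ℝ) / 2 ^ k := by
    rw [Rat.cast_def]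
    simp [q]
  rw [Set.mem_ofPred_eq, ← hq, ← hv]
  constructor
  · rintro ⟨q', e, h⟩
    rwa [← Encodable.encode_injective e]
  · intro h
    exact ⟨q, rfl, h⟩

theorem val_digits (x : ℝ) (h0 : 0 ≤ x) (h1 : x < 1) (k : ℕ) :
    ((val (digits x) k : ℕ) : ℤ) = ⌊x * 2 ^ k⌋ := by
  induction k with
  | zero =>
    simp only [val, pow_zero, mul_one]
    symm
    rw [Nat.cast_zero, Int.floor_eq_zero_iff]
    exact ⟨h0, h1⟩
  | succ k ih =>
    have e : x * 2 ^ (k + 1) = 2 * (x * 2 ^ k) := by ring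
    have l1 : 2 * ⌊x * 2 ^ k⌋ ≤ ⌊x * 2 ^ (k + 1)⌋ := by
      rw [Int.le_floor, e]; push_cast
      linarith [Int.floor_le (x * 2 ^ k)]
    have l2 : ⌊x * 2 ^ (k + 1)⌋ < 2 * ⌊x * 2 ^ k⌋ + 2 := by
      rw [Int.floor_lt, e]; push_cast
      linarith [Int.lt_floor_add_one (x * 2 ^ k)]
    rw [val]; push_cast
    rw [ih]
    by_cases hb : ⌊x * 2 ^ (k + 1)⌋ % 2 = 1
    · simp only [oX, digits, hb, decide_true, cond_true]; push_cast; omega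
    · simp only [oX, digits, hb, decide_false, cond_false]; push_cast; omega

theorem measurable_digits : Measurable digits := by
  rw [measurable_pi_iff]
  intro n
  have h : Measurable (fun x : ℝ => ⌊x * 2 ^ (n + 1)⌋) :=
    Int.measurable_floor.comp (measurable_id.mul_const _)
  exact (measurable_from_top (f := fun z : ℤ => decide (z % 2 = 1))).comp h

theorem measurable_val (k : ℕ) : Measurable (fun X => val X k) := by
  induction k with
  | zero => exact measurable_const
  | succ k ih =>
    have h : Measurable (fun X : Cantor => oX X k) :=
      (measurable_from_top (f := fun b : Bool => cond b 1 0)).comp (measurable_pi_apply k)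
    exact (ih.const_mul 2).add h

theorem val_ones (X : Cantor) (c : ℕ) (h : ∀ i < c, X i = true) : val X c = 2 ^ c - 1 := by
  induction c with
  | zero => rfl
  | succ c ih =>
    rw [val, ih (fun i hi => h i (by omega)), oX, h c (by omega), cond_true, pow_succ']
    have := Nat.one_le_two_pow (n := c)
    omega

theorem exists_M (c : ℕ) {P : ℕ → Prop} (hP : S2 P) :
    ∃ M : CodeO, ∀ X,
      (∀ n, (evalO X M n).Dom → val X c ≠ 2 ^ c - 1) ∧
      (∀ n m, n ≤ m → (evalO X M m).Dom → (evalO X M n).Dom) ∧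
      ((∀ n, (evalO X M n).Dom) ↔ (val X c ≠ 2 ^ c - 1 ∧ ∀ k,
        val X (k + 1) % 2 = 0 ∨ ¬ P (Nat.pair (2 * val X (k + 1)) (2 ^ (k + 1))))) := by
  obtain ⟨R, hR, h⟩ := hP
  let Q : ℕ → ℕ → ℕ → Prop := fun n w t =>
    ¬ (w / 2 ^ (n + 1) = 2 ^ c - 1) ∧ ∀ j < n + 1,
      (w / 2 ^ (n + c - j.unpair.1)) % 2 = 0 ∨ ∃ t' < t,
        ¬ R (Nat.pair (2 * (w / 2 ^ (n + c - j.unpair.1))) (2 ^ (j.unpair.1 + 1))) j.unpair.2 t'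
  have hQ : PrimrecPred (fun x : (ℕ × ℕ) × ℕ => Q x.1.1 x.1.2 x.2) := by
    refine PrimrecPred.and (PrimrecPred.not ?_) ?_
    · exact Primrec.eq.comp (Primrec.nat_div.comp (Primrec.snd.comp Primrec.fst)
        (primrec_two_pow.comp (Primrec.succ.comp (Primrec.fst.comp Primrec.fst))))
        (Primrec.const _)
    · have hu : Primrec (fun y : ℕ × ((ℕ × ℕ) × ℕ) => y.1.unpair) :=
        Primrec.unpair.comp Primrec.fst
      have ha : Primrec (fun y : ℕ × ((ℕ × ℕ) × ℕ) =>
          y.2.1.2 / 2 ^ (y.2.1.1 + c - y.1.unpair.1)) :=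
        Primrec.nat_div.comp (Primrec.snd.comp (Primrec.fst.comp Primrec.snd))
          (primrec_two_pow.comp (Primrec.nat_sub.comp
            (Primrec.nat_add.comp (Primrec.fst.comp (Primrec.fst.comp Primrec.snd))
              (Primrec.const c)) (Primrec.fst.comp hu)))
      have h1 : PrimrecPred (fun y : ℕ × ((ℕ × ℕ) × ℕ) =>
          (y.2.1.2 / 2 ^ (y.2.1.1 + c - y.1.unpair.1)) % 2 = 0) :=
        Primrec.eq.comp (Primrec.nat_mod.comp ha (Primrec.const 2)) (Primrec.const 0)
      have hm : Primrec (fun y : ℕ × ((ℕ × ℕ) × ℕ) =>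
          Nat.pair (2 * (y.2.1.2 / 2 ^ (y.2.1.1 + c - y.1.unpair.1))) (2 ^ (y.1.unpair.1 + 1))) :=
        Primrec₂.natPair.comp (Primrec.nat_mul.comp (Primrec.const 2) ha)
          (primrec_two_pow.comp (Primrec.succ.comp (Primrec.fst.comp hu)))
      have h2 : PrimrecRel (fun (t' : ℕ) (y : ℕ × ((ℕ × ℕ) × ℕ)) =>
          ¬ R (Nat.pair (2 * (y.2.1.2 / 2 ^ (y.2.1.1 + c - y.1.unpair.1)))
            (2 ^ (y.1.unpair.1 + 1))) y.1.unpair.2 t') :=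
        PrimrecPred.not (hR.comp (f := fun z : ℕ × (ℕ × ((ℕ × ℕ) × ℕ)) =>
          ((Nat.pair (2 * (z.2.2.1.2 / 2 ^ (z.2.2.1.1 + c - z.2.1.unpair.1)))
            (2 ^ (z.2.1.unpair.1 + 1)), z.2.1.unpair.2), z.1))
          (Primrec.pair (Primrec.pair (hm.comp Primrec.snd)
            (Primrec.snd.comp (hu.comp Primrec.snd))) Primrec.fst))
      have h3 : PrimrecRel (fun (j : ℕ) (x : (ℕ × ℕ) × ℕ) =>
          (x.1.2 / 2 ^ (x.1.1 + c - j.unpair.1)) % 2 = 0 ∨ ∃ t' < x.2,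
          ¬ R (Nat.pair (2 * (x.1.2 / 2 ^ (x.1.1 + c - j.unpair.1)))
            (2 ^ (j.unpair.1 + 1))) j.unpair.2 t') :=
        h1.or ((exists_lt_rel h2).comp (f := fun y : ℕ × ((ℕ × ℕ) × ℕ) => y.2.2)
          (g := fun y => y) (Primrec.snd.comp Primrec.snd) Primrec.id)
      exact (forall_lt_rel h3).comp (f := fun x : (ℕ × ℕ) × ℕ => x.1.1 + 1) (g := fun x => x)
        (Primrec.succ.comp (Primrec.fst.comp Primrec.fst)) Primrec.id
  obtain ⟨M, hM⟩ := exists_machine c hQ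
  have key : ∀ X n, (evalO X M n).Dom ↔ (val X c ≠ 2 ^ c - 1 ∧ ∀ j < n + 1,
      val X (j.unpair.1 + 1) % 2 = 0 ∨
      ∃ t, ¬ R (Nat.pair (2 * val X (j.unpair.1 + 1)) (2 ^ (j.unpair.1 + 1))) j.unpair.2 t) := by
    intro X n
    rw [hM]
    have e1 : val X (n + c + 1) / 2 ^ (n + 1) = val X c := by
      have := val_div X c (n + 1)
      rwa [show c + (n + 1) = n + c + 1 by ring] at this
    have e2 : ∀ j < n + 1, val X (n + c + 1) / 2 ^ (n + c - j.unpair.1) = val X (j.unpair.1 + 1) := by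
      intro j hj
      have hj' := Nat.unpair_left_le j
      have := val_div X (j.unpair.1 + 1) (n + c - j.unpair.1)
      rwa [show j.unpair.1 + 1 + (n + c - j.unpair.1) = n + c + 1 by omega] at this
    constructor
    · rintro ⟨t, ht1, ht2⟩
      refine ⟨by rwa [e1] at ht1, fun j hj => ?_⟩
      have := ht2 j hj
      rw [e2 j hj] at this
      rcases this with h | ⟨t', _, h⟩
      · exact Or.inl h
      · exact Or.inr ⟨t', h⟩
    · rintro ⟨h1, h2⟩
      have h3 : ∀ j, ∃ t, j < n + 1 → (val X (j.unpair.1 + 1) % 2 = 0 ∨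
          ¬ R (Nat.pair (2 * val X (j.unpair.1 + 1)) (2 ^ (j.unpair.1 + 1))) j.unpair.2 t) := by
        intro j
        by_cases hj : j < n + 1
        · rcases h2 j hj with h | ⟨t, h⟩
          · exact ⟨0, fun _ => Or.inl h⟩
          · exact ⟨t, fun _ => Or.inr h⟩
        · exact ⟨0, fun h => absurd h hj⟩
      choose t ht using h3
      refine ⟨(Finset.range (n + 1)).sup t + 1, by rwa [e1], fun j hj => ?_⟩
      rw [e2 j hj]
      rcases ht j hj with h | h
      · exact Or.inl h
      · exact Or.inr ⟨t j, Nat.lt_succ_of_le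
          (Finset.le_sup (f := t) (Finset.mem_range.2 hj)), h⟩
  refine ⟨M, fun X => ⟨fun n hn => ((key X n).1 hn).1, fun n m hnm hm => ?_, ?_⟩⟩
  · rw [key] at hm ⊢
    exact ⟨hm.1, fun j hj => hm.2 j (by omega)⟩
  · simp only [key, h]
    push Not
    constructor
    · intro hh
      refine ⟨(hh 0).1, fun k => ?_⟩
      by_cases h2 : val X (k + 1) % 2 = 0
      · exact Or.inl h2
      · refine Or.inr fun s => ?_
        have := (hh (Nat.pair k s)).2 (Nat.pair k s) (by omega)
        simp only [Nat.unpair_pair] at this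
        exact this.resolve_left h2
    · rintro ⟨h1, h2⟩ n
      refine ⟨h1, fun j _ => ?_⟩
      rcases h2 j.unpair.1 with h | h
      · exact Or.inl h
      · exact Or.inr (h _)

/-- The class of sequences used for the machine. -/
def goodSet (α : ℝ) (c : ℕ) : Set Cantor := {X | val X c ≠ 2 ^ c - 1 ∧ ∀ k,
  val X (k + 1) % 2 = 0 ∨ ¬ (Nat.pair (2 * val X (k + 1)) (2 ^ (k + 1)) ∈
    {m | ∃ q : ℚ, Encodable.encode q = m ∧ α < (q : ℝ)})}

theorem measurable_goodSet (α : ℝ) (c : ℕ) : MeasurableSet (goodSet α c) := by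
  have : goodSet α c = ((fun X => val X c) ⁻¹' {v | v ≠ 2 ^ c - 1}) ∩
      ⋂ k, ((fun X => val X (k + 1)) ⁻¹' {v | v % 2 = 0 ∨ ¬ (Nat.pair (2 * v) (2 ^ (k + 1)) ∈
        {m | ∃ q : ℚ, Encodable.encode q = m ∧ α < (q : ℝ)})}) := by
    ext X
    simp only [goodSet, Set.mem_inter_iff, Set.mem_iInter, Set.mem_preimage, Set.mem_ofPred_eq]
  rw [this]
  refine (measurable_val c (MeasurableSet.of_discrete)).inter (MeasurableSet.iInter fun k => ?_)
  exact measurable_val (k + 1) (MeasurableSet.of_discrete)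

theorem preimage_goodSet (α : ℝ) (h0 : 0 < α) (h1 : α < 1) (c : ℕ) (hc : α + (2 : ℝ)⁻¹ ^ c < 1) :
    digits ⁻¹' goodSet α c ∩ Set.Ico 0 1 = Set.Icc 0 α := by
  ext x
  simp only [Set.mem_inter_iff, Set.mem_preimage, Set.mem_Ico, Set.mem_Icc]
  constructor
  · rintro ⟨⟨_, hx⟩, hx0, hx1⟩
    refine ⟨hx0, ?_⟩
    by_contra hlt
    push Not at hlt
    -- some truncation of `x` exceeds `α`
    have hex : ∃ k, α < (val (digits x) k : ℝ) / 2 ^ k := by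
      obtain ⟨k, hk⟩ := exists_pow_lt_of_lt_one (sub_pos.2 hlt) (by norm_num : (2 : ℝ)⁻¹ < 1)
      refine ⟨k, ?_⟩
      have hv : (val (digits x) k : ℝ) = (⌊x * 2 ^ k⌋ : ℝ) := by
        exact_mod_cast congrArg (fun z : ℤ => (z : ℝ)) (val_digits x hx0 hx1 k)
      have hp : (0 : ℝ) < 2 ^ k := by positivity
      rw [hv, lt_div_iff₀ hp]
      rw [inv_pow, inv_lt_iff_one_lt_mul₀ hp] at hk
      have := Int.lt_floor_add_one (x * 2 ^ k)
      nlinarith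
    let k := Nat.find hex
    have hk : α < (val (digits x) k : ℝ) / 2 ^ k := Nat.find_spec hex
    have hmin : ∀ m < k, ¬ α < (val (digits x) m : ℝ) / 2 ^ m := fun m hm => Nat.find_min hex hm
    clear_value k
    cases k with
    | zero => simp [val] at hk; linarith
    | succ k =>
      by_cases he : val (digits x) (k + 1) % 2 = 0
      · apply hmin k (Nat.lt_succ_self k)
        have : val (digits x) (k + 1) = 2 * val (digits x) k := by
          have := oX_le (digits x) k
          rw [val] at he ⊢; omega
        rw [this] at hk
        push_cast at hk
        rwa [pow_succ', mul_div_mul_left _ _ (two_ne_zero)] at hk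
      · refine (hx k).resolve_left he ?_
        rw [encode_dyadic _ _ (by omega)]
        exact hk
  · rintro ⟨hx0, hxα⟩
    have hx1 : x < 1 := lt_of_le_of_lt hxα h1
    have hv : ∀ k, (val (digits x) k : ℝ) ≤ x * 2 ^ k := by
      intro k
      have hv : (val (digits x) k : ℝ) = (⌊x * 2 ^ k⌋ : ℝ) := by
        exact_mod_cast congrArg (fun z : ℤ => (z : ℝ)) (val_digits x hx0 hx1 k)
      rw [hv]; exact Int.floor_le _
    refine ⟨⟨fun he => ?_, fun k => ?_⟩, hx0, hx1⟩
    · have := hv c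
      rw [he, Nat.cast_sub Nat.one_le_two_pow] at this
      push_cast at this
      have hp : (0 : ℝ) < 2 ^ c := by positivity
      have h3 : (α + (2 : ℝ)⁻¹ ^ c) * 2 ^ c < 1 * 2 ^ c := mul_lt_mul_of_pos_right hc hp
      have h4 : (2 : ℝ)⁻¹ ^ c * 2 ^ c = 1 := by rw [← mul_pow]; norm_num
      nlinarith
    · by_cases he : val (digits x) (k + 1) % 2 = 0
      · exact Or.inl he
      · right
        rw [encode_dyadic _ _ (by omega), not_lt, div_le_iff₀ (by positivity)]
        refine (hv (k + 1)).trans ?_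
        gcongr

theorem muR_goodSet (α : ℝ) (h0 : 0 < α) (h1 : α < 1) (c : ℕ) (hc : α + (2 : ℝ)⁻¹ ^ c < 1) :
    muR (goodSet α c) = α := by
  rw [muR, mu, Measure.map_apply measurable_digits (measurable_goodSet α c),
    Measure.restrict_apply (measurable_digits (measurable_goodSet α c)),
    preimage_goodSet α h0 h1 c hc, Real.volume_Icc, sub_zero, ENNReal.toReal_ofReal h0.le]

end RandProb

namespace RandProb

/-- **Oracle machines with prescribed totality and infinitude probability.**
If `α ∈ (0,1)` is a `∅'`-right-c.e. real and `α + 2^{-c} < 1`, then there are an oracle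
machine `M` and a string `ρ` of length `c` such that `M` diverges everywhere on every
oracle compatible with `ρ` (equivalently, on every oracle extending `ρ`), and
`μ(TOT(M)) = μ(INF(M)) = α`. -/
theorem prescribed_totality_probability (α : ℝ) (h0 : 0 < α) (h1 : α < 1)
    (hα : RightCeIn (iterJump 1) α) (c : ℕ) (hc : α + (2 : ℝ)⁻¹ ^ c < 1) :
    ∃ (M : CodeO) (ρ : List Bool), ρ.length = c ∧
      (∀ X : Cantor, Extends X ρ → ∀ n, ¬ (evalO X M n).Dom) ∧
      muR (TOT M) = α ∧ muR (INF M) = α := by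
  obtain ⟨M, hM⟩ := exists_M c (S2_of_ceIn hα)
  have hT : TOT M = goodSet α c := by
    ext X
    exact (hM X).2.2
  have hI : INF M = TOT M := by
    ext X
    constructor
    · intro hX n
      obtain ⟨m, hm, hnm⟩ := Set.Infinite.exists_gt hX n
      exact (hM X).2.1 n m hnm.le hm
    · intro hX
      have : domSet M X = Set.univ := Set.eq_univ_of_forall hX
      change (domSet M X).Infinite
      rw [this]
      exact Set.infinite_univ
  refine ⟨M, List.replicate c true, by simp, fun X hX n hn => ?_, ?_, ?_⟩
  · refine (hM X).1 n hn (val_ones X c fun i hi => ?_)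
    unfold Extends initSeg at hX
    rw [List.length_replicate] at hX
    have := congrArg (fun l => l[i]?) hX
    simpa [hi] using this
  · rw [hT]; exact muR_goodSet α h0 h1 c hc
  · rw [hI, hT]; exact muR_goodSet α h0 h1 c hc

end RandProb
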